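/- For every real δ < 2, Ei^{(δ)}(x) ~ e^x / x^δ as x → +∞, i.e. x^δ e^{-x} Ei^{(δ)}(x) → 1 as x → +∞. -/

import Mathlib

/-!
Reflecting the negative half-line turns the truncated principal value into
`∫_ε^1 (e^t - e^{-t})/t^δ dt - ∫_1^∞ e^{-t}/t^δ dt + ∫_1^x e^t/t^δ dt`. Since
`|e^t - e^{-t}| ≤ 4 t` on `(0, 1]`, the first integrand is dominated by `4 t^{1-δ}`, which is
integrable at `0` because `δ < 2`. Hence the limit `ε → 0⁺` exists, and
`Ei^{(δ)}(x) = L + ∫_1^x e^t/t^δ dt` for `x ≥ 1`, with `L` independent of `x` (`Ei_eq`).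

For the asymptotics, let `h(x) = e^x x^{-δ}`. The difference `D(x) = Ei^{(δ)}(x) - h(x)` has
derivative `δ h(x)/x`, which for `x ≥ 2(δ+1)` is bounded in absolute value by the derivative of
`2|δ| h(x)/x`. So `|D(x)| ≤ C + 2|δ| h(x)/x` for large `x`, which is `o(h(x))`
(`exists_diff_bound`).
-/

open MeasureTheory Filter Topology

/-- The `δ`-exponential integral `Ei^{(δ)}(x)`, defined for `x > 0` (and `δ < 2`) as the
principal value `lim_{ε→0⁺} (∫_{-∞}^{-ε} e^t/t^δ dt + ∫_ε^x e^t/t^δ dt)`, where `t^δ` means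
`-|t|^δ` for negative `t`. -/
noncomputable def Ei (δ x : ℝ) : ℝ :=
  limUnder (𝓝[>] (0:ℝ)) (fun ε =>
    (∫ t in Set.Iic (-ε), Real.exp t / (-(|t| ^ δ))) + ∫ t in ε..x, Real.exp t / t ^ δ)

lemma continuousOn_exp_neg_div_rpow (δ : ℝ) :
    ContinuousOn (fun t : ℝ => Real.exp (-t) / t ^ δ) (Set.Ioi 0) := by
  intro t ht
  have ht : 0 < t := ht
  have h1 : ContinuousAt (fun t : ℝ => t ^ δ) t :=
    Real.continuousAt_rpow_const t δ (Or.inl ht.ne')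
  exact ((by fun_prop : ContinuousAt (fun t : ℝ => Real.exp (-t)) t).div h1
    (Real.rpow_pos_of_pos ht δ).ne').continuousWithinAt

lemma continuousOn_exp_div_rpow (δ : ℝ) :
    ContinuousOn (fun t : ℝ => Real.exp t / t ^ δ) (Set.Ioi 0) := by
  intro t ht
  have ht : 0 < t := ht
  have h1 : ContinuousAt (fun t : ℝ => t ^ δ) t :=
    Real.continuousAt_rpow_const t δ (Or.inl ht.ne')
  exact ((by fun_prop : ContinuousAt (fun t : ℝ => Real.exp t) t).div h1
    (Real.rpow_pos_of_pos ht δ).ne').continuousWithinAt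

lemma intervalIntegrable_of_continuousOn_Ioi {f : ℝ → ℝ} (hf : ContinuousOn f (Set.Ioi 0))
    {a b : ℝ} (ha : 0 < a) (hb : 0 < b) : IntervalIntegrable f volume a b :=
  (hf.mono fun _ ht => (lt_min ha hb).trans_le ht.1).intervalIntegrable

lemma integrableOn_exp_neg_div_rpow (δ : ℝ) {a : ℝ} (ha : 0 < a) :
    IntegrableOn (fun t : ℝ => Real.exp (-t) / t ^ δ) (Set.Ioi a) := by
  refine integrable_of_isBigO_exp_neg (b := 1 / 2) (by norm_num)
    ((continuousOn_exp_neg_div_rpow δ).mono fun t ht => ha.trans_le ht) ?_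
  have h0 := tendsto_rpow_mul_exp_neg_mul_atTop_nhds_zero (-δ) (1 / 2) (by norm_num)
  have h1 := (h0.isBigO_one ℝ).mul
    (Asymptotics.isBigO_refl (fun x : ℝ => Real.exp (-(1 / 2) * x)) atTop)
  refine (h1.congr' ?_ ?_)
  · filter_upwards [eventually_gt_atTop 0] with x hx
    rw [mul_assoc, ← Real.exp_add, Real.rpow_neg hx.le, div_eq_inv_mul]
    ring_nf
  · exact Eventually.of_forall fun x => by simp

/-- The symmetrised integrand is integrable at `0`; this is where `δ < 2` enters. -/
lemma integrableOn_symm (δ : ℝ) (hδ : δ < 2) :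
    IntegrableOn (fun t : ℝ => Real.exp t / t ^ δ - Real.exp (-t) / t ^ δ) (Set.Icc 0 1) := by
  rw [integrableOn_Icc_iff_integrableOn_Ioc]
  have h1 : IntegrableOn (fun t : ℝ => 4 * t ^ (1 - δ)) (Set.Ioc 0 1) := by
    have := (intervalIntegral.intervalIntegrable_rpow' (a := 0) (b := 1)
      (show -1 < 1 - δ by linarith)).const_mul 4
    rwa [intervalIntegrable_iff_integrableOn_Ioc_of_le zero_le_one] at this
  refine h1.mono' ?_ ?_
  · exact (((continuousOn_exp_div_rpow δ).sub (continuousOn_exp_neg_div_rpow δ)).mono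
      fun t ht => ht.1).aestronglyMeasurable measurableSet_Ioc
  · refine (ae_restrict_iff' measurableSet_Ioc).2 (Eventually.of_forall fun t ht => ?_)
    have ht0 : 0 < t := ht.1
    have ha : |t| = t := abs_of_pos ht0
    have e1 := Real.abs_exp_sub_one_le (x := t) (by rw [ha]; exact ht.2)
    have e2 := Real.abs_exp_sub_one_le (x := -t) (by rw [abs_neg, ha]; exact ht.2)
    rw [abs_neg] at e2
    rw [ha, abs_le] at e1 e2
    have e3 : |Real.exp t - Real.exp (-t)| ≤ 4 * t := by
      rw [abs_le]; constructor <;> linarith [e1.1, e1.2, e2.1, e2.2]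
    have hp := Real.rpow_pos_of_pos ht0 δ
    rw [← sub_div, Real.norm_eq_abs, abs_div, abs_of_pos hp, Real.rpow_sub ht0, Real.rpow_one,
      ← mul_div_assoc]
    gcongr

/-- The truncated principal value, with the singular parts combined. -/
lemma truncated_eq (δ : ℝ) {ε x : ℝ} (hε : 0 < ε) (hx : 1 ≤ x) :
    (∫ t in Set.Iic (-ε), Real.exp t / (-(|t| ^ δ))) + ∫ t in ε..x, Real.exp t / t ^ δ =
      (∫ t in ε..1, (Real.exp t / t ^ δ - Real.exp (-t) / t ^ δ))
        - (∫ t in Set.Ioi 1, Real.exp (-t) / t ^ δ) + ∫ t in (1 : ℝ)..x, Real.exp t / t ^ δ := by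
  have h1 : (∫ t in Set.Iic (-ε), Real.exp t / (-(|t| ^ δ))) =
      -∫ t in Set.Ioi ε, Real.exp (-t) / t ^ δ := by
    rw [← integral_comp_neg_Ioi, ← integral_neg]
    refine setIntegral_congr_fun measurableSet_Ioi fun t ht => ?_
    have ht : 0 < t := hε.trans ht
    simp only [abs_neg, abs_of_pos ht, div_neg]
  have h2 := intervalIntegral.integral_interval_add_Ioi
    (integrableOn_exp_neg_div_rpow δ hε) (integrableOn_exp_neg_div_rpow δ one_pos)
  have i1 := intervalIntegrable_of_continuousOn_Ioi (continuousOn_exp_div_rpow δ) hε one_pos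
  have i2 := intervalIntegrable_of_continuousOn_Ioi (continuousOn_exp_neg_div_rpow δ) hε one_pos
  have i3 := intervalIntegrable_of_continuousOn_Ioi (continuousOn_exp_div_rpow δ) one_pos
    (one_pos.trans_le hx)
  rw [h1, ← h2, intervalIntegral.integral_sub i1 i2,
    ← intervalIntegral.integral_add_adjacent_intervals i1 i3]
  ring

lemma Ei_eq (δ : ℝ) (hδ : δ < 2) :
    ∃ L : ℝ, ∀ x, 1 ≤ x → Ei δ x = L + ∫ t in (1 : ℝ)..x, Real.exp t / t ^ δ := by
  refine ⟨(∫ t in (0 : ℝ)..1, (Real.exp t / t ^ δ - Real.exp (-t) / t ^ δ))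
        - (∫ t in Set.Ioi 1, Real.exp (-t) / t ^ δ), fun x hx => ?_⟩
  refine Tendsto.limUnder_eq ?_
  have hc := intervalIntegral.continuousOn_primitive_interval_left (a := 0) (b := 1)
    (μ := volume) (by rw [Set.uIcc_of_le zero_le_one]; exact integrableOn_symm δ hδ)
  rw [Set.uIcc_of_le zero_le_one] at hc
  have hl := (hc 0 (by simp)).tendsto.mono_left
    (nhdsWithin_le_of_mem (Icc_mem_nhdsGT (zero_lt_one' ℝ)))
  refine ((hl.sub_const _).add_const _).congr' ?_
  filter_upwards [self_mem_nhdsWithin] with ε hε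
  exact (truncated_eq δ hε hx).symm

lemma hasDerivAt_exp_mul_rpow (s : ℝ) {x : ℝ} (hx : 0 < x) :
    HasDerivAt (fun x : ℝ => Real.exp x * x ^ s)
      (Real.exp x * x ^ s + Real.exp x * (s * x ^ (s - 1))) x :=
  (Real.hasDerivAt_exp x).mul (Real.hasDerivAt_rpow_const (Or.inl hx.ne'))

/-- Any antiderivative of `e^t/t^δ` differs from `e^x x^{-δ}` by at most
`C + 2|δ| e^x x^{-δ-1}` for large `x`. -/
lemma exists_diff_bound (δ L : ℝ) :
    ∃ C : ℝ, ∀ᶠ x : ℝ in atTop,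
      |L + (∫ t in (1 : ℝ)..x, Real.exp t / t ^ δ) - Real.exp x * x ^ (-δ)| ≤
        C + 2 * |δ| * (Real.exp x * x ^ (-δ - 1)) := by
  -- Beyond `2(δ+1)` the derivative of `2 e^x x^{-δ-1}` dominates `e^x x^{-δ-1}`.
  set a : ℝ := max 1 (2 * (δ + 1)) with ha
  have ha1 : 1 ≤ a := le_max_left _ _
  have ha2 : 2 * (δ + 1) ≤ a := le_max_right _ _
  set D : ℝ → ℝ := fun x =>
    L + (∫ t in (1 : ℝ)..x, Real.exp t / t ^ δ) - Real.exp x * x ^ (-δ) with hD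
  have hD' : ∀ x, 0 < x → HasDerivAt D (δ * (Real.exp x * x ^ (-δ - 1))) x := by
    intro x hx
    have hcont := continuousOn_exp_div_rpow δ
    have h1 : HasDerivAt (fun x => ∫ t in (1 : ℝ)..x, Real.exp t / t ^ δ)
        (Real.exp x / x ^ δ) x :=
      intervalIntegral.integral_hasDerivAt_right
        (intervalIntegrable_of_continuousOn_Ioi hcont one_pos hx)
        (hcont.stronglyMeasurableAtFilter isOpen_Ioi x hx)
        (hcont.continuousAt (Ioi_mem_nhds hx))
    have h2 := (h1.const_add L).sub (hasDerivAt_exp_mul_rpow (-δ) hx)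
    refine h2.congr_deriv ?_
    rw [Real.rpow_neg hx.le δ]
    ring
  have hB' : ∀ x, 0 < x → HasDerivAt
      (fun x => |D a| + 2 * |δ| * (Real.exp x * x ^ (-δ - 1)))
      (2 * |δ| * (Real.exp x * x ^ (-δ - 1) +
        Real.exp x * ((-δ - 1) * x ^ (-δ - 1 - 1)))) x := fun x hx =>
    ((hasDerivAt_exp_mul_rpow (-δ - 1) hx).const_mul _).const_add _
  refine ⟨|D a|, ?_⟩
  filter_upwards [eventually_ge_atTop a] with x hx
  have pos : ∀ y, a ≤ y → 0 < y := fun y hy => by linarith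
  refine image_norm_le_of_norm_deriv_right_le_deriv_boundary' (f := D) (a := a) (b := x)
    (fun y hy => (hD' y (pos y hy.1)).continuousAt.continuousWithinAt)
    (fun y hy => (hD' y (pos y hy.1)).hasDerivWithinAt)
    (B := fun x => |D a| + 2 * |δ| * (Real.exp x * x ^ (-δ - 1))) ?_
    (fun y hy => (hB' y (pos y hy.1)).continuousAt.continuousWithinAt)
    (fun y hy => (hB' y (pos y hy.1)).hasDerivWithinAt) ?_ ⟨hx, le_rfl⟩
  · have := Real.rpow_nonneg (pos a le_rfl).le (-δ - 1)
    rw [Real.norm_eq_abs]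
    exact le_add_of_nonneg_right (by positivity)
  · intro y hy
    have hy0 := pos y hy.1
    have hq := Real.rpow_pos_of_pos hy0 (-δ - 1 - 1)
    have hr : y ^ (-δ - 1) = y * y ^ (-δ - 1 - 1) := by
      rw [Real.rpow_sub_one hy0.ne' (-δ - 1)]; field_simp
    have hp := Real.rpow_pos_of_pos hy0 (-δ - 1)
    rw [Real.norm_eq_abs, abs_mul, abs_of_pos (mul_pos (Real.exp_pos y) hp), hr]
    have key : 0 ≤ |δ| * (Real.exp y * y ^ (-δ - 1 - 1)) * (y - 2 * (δ + 1)) :=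
      mul_nonneg (by positivity) (by linarith [hy.1])
    linarith

/-- For every real `δ < 2`, `Ei^{(δ)}(x) ~ e^x / x^δ` as `x → +∞`:
`x^δ e^{-x} Ei^{(δ)}(x) → 1`. -/
theorem statement5 (δ : ℝ) (hδ : δ < 2) :
    Tendsto (fun x : ℝ => x ^ δ * Real.exp (-x) * Ei δ x) atTop (𝓝 1) := by
  obtain ⟨L, hL⟩ := Ei_eq δ hδ
  obtain ⟨C, hC⟩ := exists_diff_bound δ L
  rw [← tendsto_sub_nhds_zero_iff]
  have hlim : Tendsto (fun x : ℝ => C * (x ^ δ * Real.exp (-1 * x)) + 2 * |δ| * x⁻¹)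
      atTop (𝓝 0) := by
    simpa using ((tendsto_rpow_mul_exp_neg_mul_atTop_nhds_zero δ 1 one_pos).const_mul C).add
      (tendsto_inv_atTop_zero.const_mul (2 * |δ|))
  refine squeeze_zero_norm' ?_ hlim
  filter_upwards [hC, eventually_ge_atTop 1] with x hx hx1
  have hx0 : 0 < x := by linarith
  rw [← hL x hx1] at hx
  have hp := Real.rpow_pos_of_pos hx0 δ
  have hw : 0 < x ^ δ * Real.exp (-x) := by positivity
  have hone : x ^ δ * Real.exp (-x) * (Real.exp x * x ^ (-δ)) = 1 := by
    rw [Real.rpow_neg hx0.le, Real.exp_neg]; field_simp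
  have hinv : Real.exp x * x ^ (-δ - 1) = Real.exp x * x ^ (-δ) * x⁻¹ := by
    rw [Real.rpow_sub_one hx0.ne']; ring
  calc ‖x ^ δ * Real.exp (-x) * Ei δ x - 1‖
      = x ^ δ * Real.exp (-x) * |Ei δ x - Real.exp x * x ^ (-δ)| := by
        rw [← abs_of_pos hw, ← abs_mul, abs_of_pos hw, mul_sub, hone, Real.norm_eq_abs]
    _ ≤ x ^ δ * Real.exp (-x) * (C + 2 * |δ| * (Real.exp x * x ^ (-δ - 1))) := by gcongr
    _ = C * (x ^ δ * Real.exp (-1 * x)) +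
          2 * |δ| * x⁻¹ * (x ^ δ * Real.exp (-x) * (Real.exp x * x ^ (-δ))) := by
        rw [hinv, neg_one_mul]; ring
    _ = C * (x ^ δ * Real.exp (-1 * x)) + 2 * |δ| * x⁻¹ := by rw [hone, mul_one]
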